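/- arXiv:1906.00020 — 2 statements merged into one kernel-verified Lean document; each statement's English description precedes it below -/
import Mathlib

section
/- Let a ≥ 1, b, e be natural numbers, let m ≡_k A_a b, and let w = A_{a−1} e. Then w ≡_k A_{a−1} e (i.e., w is in k-normal form as written) provided that either (1) A_{a−1}(⟨m⟩₋₁) ≤ w < A_a(⟨m⟩₋₁), or (2) A_{a−1} m ≤ w < A_a(b+1). -/
/-- The base-`k` Ackermann function `A_a(k, b)`:
`A_0(k, b) = k ^ b` and `A_{a+1}(k, b) = A_a^k(k, A_{a+1}(k, b-1))`,
with the auxiliary value `A_{a+1}(k, -1) = 1`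
(equivalently, `A_{a+1}(k, b) = (A_a^k)^[b+1] (1)`). -/
def Ack (k : ℕ) : ℕ → ℕ → ℕ
  | 0, b => k ^ b
  | a + 1, b => ((Ack k a)^[k])^[b + 1] 1

/-- `IsSandwich k m n a b ms` says that `(A_{a i}(k, b i))_{i=1}^n` is a
`k`-sandwiching sequence for `m`, with sandwiching values `(ms i)_{i=0}^n`:
`ms 0 = 0`; for each `i < n`, `A_{a (i+1)} (ms i) ≤ m < A_{a (i+1) + 1} (ms i)`,
`A_{a (i+1)} (b (i+1)) ≤ m < A_{a (i+1)} (b (i+1) + 1)`, and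
`ms (i+1) = A_{a (i+1)} (b (i+1))`; and `A_0 (ms n) > m`. -/
structure IsSandwich (k m n : ℕ) (a b ms : ℕ → ℕ) : Prop where
  ms_zero : ms 0 = 0
  idx_lo : ∀ i < n, Ack k (a (i + 1)) (ms i) ≤ m
  idx_hi : ∀ i < n, m < Ack k (a (i + 1) + 1) (ms i)
  arg_lo : ∀ i < n, Ack k (a (i + 1)) (b (i + 1)) ≤ m
  arg_hi : ∀ i < n, m < Ack k (a (i + 1)) (b (i + 1) + 1)
  ms_succ : ∀ i < n, ms (i + 1) = Ack k (a (i + 1)) (b (i + 1))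
  halt : m < Ack k 0 (ms n)

/-- `NF k m a b c` says that `m ≡_k A_a b + c`, i.e. `m` has `k`-normal form
`A_a b + c` (so `m = A_a b + c` and the `k`-sandwiching sequence of `m` ends
with the pair `(a, b)`). -/
def NF (k m a b c : ℕ) : Prop :=
  m = Ack k a b + c ∧
    ∃ n as bs ms, 1 ≤ n ∧ IsSandwich k m n as bs ms ∧ a = as n ∧ b = bs n

/-!
For `w = A_{a-1} e`, the sandwiching sequence of `m` yields all but the last entry of the
sandwiching sequence of `w`, and `(a - 1, e)` is the last one.

In case (1) we have `⟨m⟩₋₁ < w < m`. Lowering `m` to `w` only threatens the lower bounds of a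
sandwiching step, and these survive for all steps before the last, whose values are at most
`⟨m⟩₋₁`. In case (2) we have `m < A_0 (A_a b) ≤ w < A_a (b + 1)`, the first inequality being the
halting condition, which allows a remainder `m ≡_k A_a b + c`. Now only the upper bounds are at
stake. They have the form `m < A_c x` with `c ≥ a`, since sandwiching indices never increase. But
every value of `A_c` is a value of `A_a`, and those exceeding `A_a b` are at least `A_a (b + 1)`.
-/

namespace Ack

variable {k a b c x y : ℕ}

theorem succ_eq_iterate (k a b : ℕ) : Ack k (a + 1) b = (Ack k a)^[k * (b + 1)] 1 := by
  rw [Ack, Function.iterate_mul]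

theorem strictMono_and_self_lt (hk : 2 ≤ k) (a : ℕ) :
    StrictMono (Ack k a) ∧ ∀ x, x < Ack k a x := by
  induction a with
  | zero => exact ⟨fun _ _ h ↦ Nat.pow_lt_pow_right hk h, fun _ ↦ Nat.lt_pow_self hk⟩
  | succ a ih =>
    have iterate_strictMono : StrictMono fun n ↦ (Ack k a)^[n] 1 :=
      ih.1.strictMono_iterate_of_lt_map (ih.2 1)
    refine ⟨fun x y hxy ↦ ?_, fun x ↦ ?_⟩
    · rw [succ_eq_iterate, succ_eq_iterate]
      exact iterate_strictMono (by gcongr)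
    · rw [succ_eq_iterate]
      calc x < k * (x + 1) := by nlinarith
        _ ≤ (Ack k a)^[k * (x + 1)] 1 := iterate_strictMono.le_apply

theorem strictMono (hk : 2 ≤ k) (a : ℕ) : StrictMono (Ack k a) :=
  (strictMono_and_self_lt hk a).1

theorem self_lt (hk : 2 ≤ k) (a x : ℕ) : x < Ack k a x :=
  (strictMono_and_self_lt hk a).2 x

theorem exists_ge_eq_of_succ (hk : 2 ≤ k) (a x : ℕ) :
    ∃ y, x ≤ y ∧ Ack k (a + 1) x = Ack k a y := by
  obtain ⟨j, hj⟩ : ∃ j, k * (x + 1) = j + 1 := Nat.exists_eq_succ_of_ne_zero (by positivity)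
  have iterate_strictMono : StrictMono fun n ↦ (Ack k a)^[n] 1 :=
    (strictMono hk a).strictMono_iterate_of_lt_map (self_lt hk a 1)
  refine ⟨(Ack k a)^[j] 1, ?_, ?_⟩
  · calc x ≤ j := by nlinarith
      _ ≤ (Ack k a)^[j] 1 := iterate_strictMono.le_apply
  · rw [succ_eq_iterate, hj, Function.iterate_succ_apply']

theorem exists_ge_eq_of_le (hk : 2 ≤ k) (hac : a ≤ c) (x : ℕ) :
    ∃ y, x ≤ y ∧ Ack k c x = Ack k a y := by
  induction c, hac using Nat.le_induction generalizing x with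
  | base => exact ⟨x, le_rfl, rfl⟩
  | succ c _ ih =>
    obtain ⟨y, hxy, hy⟩ := exists_ge_eq_of_succ hk c x
    obtain ⟨z, hyz, hz⟩ := ih y
    exact ⟨z, hxy.trans hyz, hy.trans hz⟩

theorem le_of_le_of_le (hk : 2 ≤ k) (hac : a ≤ c) (hxy : x ≤ y) : Ack k a x ≤ Ack k c y := by
  obtain ⟨z, hyz, hz⟩ := exists_ge_eq_of_le hk hac y
  exact hz ▸ (strictMono hk a).monotone (hxy.trans hyz)

theorem succ_arg_le_of_lt (hk : 2 ≤ k) (hac : a ≤ c) (hlt : Ack k a b < Ack k c x) :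
    Ack k a (b + 1) ≤ Ack k c x := by
  obtain ⟨y, -, hy⟩ := exists_ge_eq_of_le hk hac x
  rw [hy] at hlt ⊢
  exact (strictMono hk a).monotone ((strictMono hk a).lt_iff_lt.1 hlt)

end Ack

/-- One step of the sandwiching procedure for `m`: `a` is the sandwiching index following the
sandwiching value `s`, and `b` is the corresponding sandwiching argument. -/
structure IsSandwichStep (k m s a b : ℕ) : Prop where
  idx_lo : Ack k a s ≤ m
  idx_hi : m < Ack k (a + 1) s
  arg_lo : Ack k a b ≤ m
  arg_hi : m < Ack k a (b + 1)

namespace IsSandwichStep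

variable {k m w s a b c d : ℕ}

theorem le_arg (hk : 2 ≤ k) (h : IsSandwichStep k m s a b) : s ≤ b :=
  Nat.lt_succ_iff.1 ((Ack.strictMono hk a).lt_iff_lt.1 (h.idx_lo.trans_lt h.arg_hi))

theorem lower (hk : 2 ≤ k) (h : IsSandwichStep k m s a b) (hlo : Ack k a b ≤ w) (hwm : w ≤ m) :
    IsSandwichStep k w s a b where
  idx_lo := ((Ack.strictMono hk a).monotone (h.le_arg hk)).trans hlo
  idx_hi := hwm.trans_lt h.idx_hi
  arg_lo := hlo
  arg_hi := hwm.trans_lt h.arg_hi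

theorem raise (hk : 2 ≤ k) (h : IsSandwichStep k m s c d) (hac : a ≤ c) (hbm : Ack k a b ≤ m)
    (hmw : m ≤ w) (hhi : w < Ack k a (b + 1)) : IsSandwichStep k w s c d where
  idx_lo := h.idx_lo.trans hmw
  idx_hi := hhi.trans_le <|
    Ack.succ_arg_le_of_lt hk (hac.trans c.le_succ) (hbm.trans_lt h.idx_hi)
  arg_lo := h.arg_lo.trans hmw
  arg_hi := hhi.trans_le <| Ack.succ_arg_le_of_lt hk hac (hbm.trans_lt h.arg_hi)

end IsSandwichStep

/-- The first `n` steps of the sandwiching procedure for `m`, without the halting condition: an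
initial segment of a sandwiching sequence. As in `IsSandwich`, the indices `a i` and the arguments
`b i` are numbered from `1` and the values `ms i` from `0`. -/
structure IsSandwichPrefix (k m n : ℕ) (a b ms : ℕ → ℕ) : Prop where
  ms_zero : ms 0 = 0
  step : ∀ i < n, IsSandwichStep k m (ms i) (a (i + 1)) (b (i + 1))
  ms_succ : ∀ i < n, ms (i + 1) = Ack k (a (i + 1)) (b (i + 1))

theorem IsSandwich.isSandwichPrefix {k m n : ℕ} {a b ms : ℕ → ℕ} (h : IsSandwich k m n a b ms) :
    IsSandwichPrefix k m n a b ms where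
  ms_zero := h.ms_zero
  step i hi := ⟨h.idx_lo i hi, h.idx_hi i hi, h.arg_lo i hi, h.arg_hi i hi⟩
  ms_succ := h.ms_succ

namespace IsSandwichPrefix

variable {k m w n i j α β : ℕ} {a b ms : ℕ → ℕ}

theorem isSandwich (h : IsSandwichPrefix k m n a b ms) (halt : m < Ack k 0 (ms n)) :
    IsSandwich k m n a b ms where
  ms_zero := h.ms_zero
  idx_lo i hi := (h.step i hi).idx_lo
  idx_hi i hi := (h.step i hi).idx_hi
  arg_lo i hi := (h.step i hi).arg_lo
  arg_hi i hi := (h.step i hi).arg_hi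
  ms_succ := h.ms_succ
  halt := halt

theorem take (h : IsSandwichPrefix k m n a b ms) (hjn : j ≤ n) :
    IsSandwichPrefix k m j a b ms where
  ms_zero := h.ms_zero
  step i hi := h.step i (hi.trans_le hjn)
  ms_succ i hi := h.ms_succ i (hi.trans_le hjn)

theorem snoc (h : IsSandwichPrefix k m n a b ms) (hstep : IsSandwichStep k m (ms n) α β) :
    IsSandwichPrefix k m (n + 1) (Function.update a (n + 1) α) (Function.update b (n + 1) β)
      (Function.update ms (n + 1) (Ack k α β)) where
  ms_zero := by simpa using h.ms_zero
  step := Nat.forall_lt_succ_right.2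
    ⟨fun i hi ↦ by simpa [hi.ne, (Nat.lt_succ_of_lt hi).ne] using h.step i hi,
      by simpa using hstep⟩
  ms_succ := Nat.forall_lt_succ_right.2
    ⟨fun i hi ↦ by simpa [hi.ne] using h.ms_succ i hi, by simp⟩

theorem ms_le_of_le (hk : 2 ≤ k) (h : IsSandwichPrefix k m n a b ms) (hij : i ≤ j) (hjn : j ≤ n) :
    ms i ≤ ms j := by
  induction j, hij using Nat.le_induction with
  | base => exact le_rfl
  | succ j _ ih =>
    calc ms i ≤ ms j := ih (Nat.le_of_succ_le hjn)
      _ ≤ b (j + 1) := (h.step j hjn).le_arg hk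
      _ ≤ Ack k (a (j + 1)) (b (j + 1)) := (Ack.self_lt hk _ _).le
      _ = ms (j + 1) := (h.ms_succ j hjn).symm

theorem idx_le_of_le (hk : 2 ≤ k) (h : IsSandwichPrefix k m n a b ms) (hij : i ≤ j) (hjn : j < n) :
    a (j + 1) ≤ a (i + 1) := by
  by_contra! hlt
  have hle : Ack k (a (i + 1) + 1) (ms i) ≤ m :=
    (Ack.le_of_le_of_le hk hlt (h.ms_le_of_le hk hij hjn.le)).trans (h.step j hjn).idx_lo
  exact (h.step i (hij.trans_lt hjn)).idx_hi.not_ge hle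

theorem lower (hk : 2 ≤ k) (h : IsSandwichPrefix k m n a b ms) (hlo : ms n ≤ w) (hwm : w ≤ m) :
    IsSandwichPrefix k w n a b ms where
  ms_zero := h.ms_zero
  step i hi := (h.step i hi).lower hk
    (h.ms_succ i hi ▸ (h.ms_le_of_le hk (Nat.succ_le_of_lt hi) le_rfl).trans hlo) hwm
  ms_succ := h.ms_succ

theorem raise (hk : 2 ≤ k) (h : IsSandwichPrefix k m (n + 1) a b ms) (hmw : m ≤ w)
    (hhi : w < Ack k (a (n + 1)) (b (n + 1) + 1)) : IsSandwichPrefix k w (n + 1) a b ms where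
  ms_zero := h.ms_zero
  step i hi := (h.step i hi).raise hk (h.idx_le_of_le hk (Nat.lt_succ_iff.1 hi) n.lt_succ_self)
    (h.step n n.lt_succ_self).arg_lo hmw hhi
  ms_succ := h.ms_succ

theorem nf_Ack (hk : 2 ≤ k) (h : IsSandwichPrefix k (Ack k α β) n a b ms)
    (hlo : Ack k α (ms n) ≤ Ack k α β) (hhi : Ack k α β < Ack k (α + 1) (ms n)) :
    NF k (Ack k α β) α β 0 := by
  have hstep : IsSandwichStep k (Ack k α β) (ms n) α β :=
    ⟨hlo, hhi, le_rfl, Ack.strictMono hk α β.lt_succ_self⟩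
  exact ⟨rfl, n + 1, _, _, _, n.succ_pos,
    (h.snoc hstep).isSandwich (by simpa using Ack.self_lt hk 0 _), by simp, by simp⟩

end IsSandwichPrefix

namespace IsSandwich

variable {k m n a e : ℕ} {aseq bseq ms : ℕ → ℕ}

theorem nf_Ack_of_between_prev (hk : 2 ≤ k) (hs : IsSandwich k m (n + 1) aseq bseq ms)
    (ha : aseq (n + 1) = a + 1) (hlo : Ack k a (ms n) ≤ Ack k a e)
    (hhi : Ack k a e < Ack k (a + 1) (ms n)) : NF k (Ack k a e) a e 0 := by
  have hprev : ms n ≤ Ack k a e := (Ack.self_lt hk a _).le.trans hlo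
  have hle : Ack k a e ≤ m := hhi.le.trans (ha ▸ hs.idx_lo n n.lt_succ_self)
  exact ((hs.isSandwichPrefix.take n.le_succ).lower hk hprev hle).nf_Ack hk hlo hhi

theorem nf_Ack_of_between_last (hk : 2 ≤ k) (hs : IsSandwich k m (n + 1) aseq bseq ms)
    (ha : aseq (n + 1) = a + 1) (hlo : Ack k a (ms (n + 1)) ≤ Ack k a e)
    (hhi : Ack k a e < Ack k (a + 1) (bseq (n + 1) + 1)) : NF k (Ack k a e) a e 0 := by
  have hle : m ≤ Ack k a e :=
    hs.halt.le.trans ((Ack.le_of_le_of_le hk a.zero_le le_rfl).trans hlo)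
  have harg : bseq (n + 1) + 1 ≤ ms (n + 1) :=
    hs.ms_succ n n.lt_succ_self ▸ Ack.self_lt hk _ _
  exact (hs.isSandwichPrefix.raise hk hle (ha ▸ hhi)).nf_Ack hk hlo
    (hhi.trans_le ((Ack.strictMono hk _).monotone harg))

end IsSandwich

theorem stmt_5_general (k n m a b e : ℕ) (aseq bseq ms : ℕ → ℕ) (hk : 2 ≤ k) (ha : 1 ≤ a)
    (hn : 1 ≤ n) (hs : IsSandwich k m n aseq bseq ms) (han : a = aseq n) (hbn : b = bseq n)
    (hcond :
      (Ack k (a - 1) (ms (n - 1)) ≤ Ack k (a - 1) e ∧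
        Ack k (a - 1) e < Ack k a (ms (n - 1))) ∨
      (Ack k (a - 1) (Ack k a b) ≤ Ack k (a - 1) e ∧ Ack k (a - 1) e < Ack k a (b + 1))) :
    NF k (Ack k (a - 1) e) (a - 1) e 0 := by
  obtain ⟨n, rfl⟩ := Nat.exists_eq_add_of_le' hn
  obtain ⟨a, rfl⟩ := Nat.exists_eq_add_of_le' ha
  subst hbn
  rw [Nat.add_sub_cancel, Nat.add_sub_cancel] at hcond
  rcases hcond with ⟨hlo, hhi⟩ | ⟨hlo, hhi⟩
  · exact hs.nf_Ack_of_between_prev hk han.symm hlo hhi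
  · rw [han, ← hs.ms_succ n n.lt_succ_self] at hlo
    exact hs.nf_Ack_of_between_last hk han.symm hlo hhi

theorem stmt_5 (k n m a b e : ℕ) (aseq bseq ms : ℕ → ℕ) (hk : 2 ≤ k) (ha : 1 ≤ a)
    (hn : 1 ≤ n) (hs : IsSandwich k m n aseq bseq ms) (hm : m = Ack k a b)
    (han : a = aseq n) (hbn : b = bseq n)
    (hcond :
      (Ack k (a - 1) (ms (n - 1)) ≤ Ack k (a - 1) e ∧
        Ack k (a - 1) e < Ack k a (ms (n - 1))) ∨
      (Ack k (a - 1) m ≤ Ack k (a - 1) e ∧ Ack k (a - 1) e < Ack k a (b + 1))) :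
    NF k (Ack k (a - 1) e) (a - 1) e 0 := by
  subst hm
  exact stmt_5_general k n _ a b e aseq bseq ms hk ha hn hs han hbn hcond
end

section
/- If m has simplified k-normal form m ≃_k d · (p+1) + q with p > 0, then the number d · p + q is itself in simplified k-normal form, i.e., d · p + q ≃_k d · p + q. -/
/-- `SNF k m d p q` says that `m ≃_k d · p + q`, i.e. `m` has simplified
`k`-normal form `d · p + q`: `m ≡_k A_a b + c` for some `a`, `b`, `c` with
`d = A_a b`, `m = d * p + q` and `q < d`. -/
def SNF (k m d p q : ℕ) : Prop :=
  ∃ a b c, NF k m a b c ∧ d = Ack k a b ∧ m = d * p + q ∧ q < d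

/-!
Since `A_a` is strictly increasing, `A_{a_{i+1}} m_i ≤ m < A_{a_{i+1}} (b_{i+1} + 1)` forces
`m_i ≤ b_{i+1}`, so `m_i ≤ A_{a_{i+1}} m_i ≤ m_{i+1}`. Hence every lower bound imposed by the
sandwiching sequence of `m` is at most its last value `d = m_n`, and the same sequence serves
every number between `d` and `m`; in particular it serves `m - d = d · p + q`.
-/

theorem strictMono_iterate_of_lt_apply {α : Type*} [Preorder α] {f : α → α}
    (hf : ∀ x, x < f x) (x : α) : StrictMono fun n => f^[n] x :=
  strictMono_nat_of_lt_succ fun n => by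
    simpa only [Function.iterate_succ_apply'] using hf (f^[n] x)

theorem lt_iterate_of_lt_apply {α : Type*} [Preorder α] {f : α → α} (hf : ∀ x, x < f x)
    {n : ℕ} (hn : 0 < n) (x : α) : x < f^[n] x :=
  strictMono_iterate_of_lt_apply hf x hn

section

variable {k : ℕ}

theorem lt_Ack (hk : 2 ≤ k) (a x : ℕ) : x < Ack k a x := by
  induction a generalizing x with
  | zero => exact Nat.lt_pow_self hk
  | succ a ih =>
    have lt_iterate := lt_iterate_of_lt_apply ih (Nat.zero_lt_of_lt hk)
    exact (strictMono_iterate_of_lt_apply lt_iterate 1).le_apply (x := x + 1)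

theorem Ack_strictMono (hk : 2 ≤ k) (a : ℕ) : StrictMono (Ack k a) := by
  cases a with
  | zero => exact pow_right_strictMono₀ hk
  | succ a =>
    have lt_iterate := lt_iterate_of_lt_apply (lt_Ack hk a) (Nat.zero_lt_of_lt hk)
    exact (strictMono_iterate_of_lt_apply lt_iterate 1).comp fun _ _ => Nat.succ_lt_succ

namespace IsSandwich

variable {m n : ℕ} {a b ms : ℕ → ℕ}

theorem ms_le_arg (h : IsSandwich k m n a b ms) (hk : 2 ≤ k) {i : ℕ} (hi : i < n) :
    ms i ≤ b (i + 1) :=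
  Nat.le_of_lt_succ <|
    (Ack_strictMono hk _).lt_iff_lt.1 ((h.idx_lo i hi).trans_lt (h.arg_hi i hi))

theorem Ack_ms_le_ms_succ (h : IsSandwich k m n a b ms) (hk : 2 ≤ k) {i : ℕ} (hi : i < n) :
    Ack k (a (i + 1)) (ms i) ≤ ms (i + 1) :=
  h.ms_succ i hi ▸ (Ack_strictMono hk _).monotone (h.ms_le_arg hk hi)

theorem ms_le_ms_last (h : IsSandwich k m n a b ms) (hk : 2 ≤ k) {i : ℕ} (hi : i ≤ n) :
    ms i ≤ ms n := by
  induction hi using Nat.decreasingInduction with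
  | self => exact le_rfl
  | of_succ i hi ih =>
    calc ms i ≤ Ack k (a (i + 1)) (ms i) := (lt_Ack hk _ _).le
      _ ≤ ms (i + 1) := h.Ack_ms_le_ms_succ hk hi
      _ ≤ ms n := ih

theorem ms_last (h : IsSandwich k m n a b ms) (hn : 1 ≤ n) : ms n = Ack k (a n) (b n) := by
  obtain ⟨j, rfl⟩ := Nat.exists_eq_add_of_le' hn
  exact h.ms_succ j j.lt_succ_self

theorem of_le (h : IsSandwich k m n a b ms) (hk : 2 ≤ k) {m' : ℕ} (hlast : ms n ≤ m')
    (hle : m' ≤ m) : IsSandwich k m' n a b ms where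
  ms_zero := h.ms_zero
  idx_lo _ hi :=
    (h.Ack_ms_le_ms_succ hk hi).trans ((h.ms_le_ms_last hk hi).trans hlast)
  idx_hi i hi := hle.trans_lt (h.idx_hi i hi)
  arg_lo i hi := h.ms_succ i hi ▸ (h.ms_le_ms_last hk hi).trans hlast
  arg_hi i hi := hle.trans_lt (h.arg_hi i hi)
  ms_succ := h.ms_succ
  halt := hle.trans_lt h.halt

end IsSandwich

theorem NF.of_remainder_le {m a b c c' : ℕ} (h : NF k m a b c) (hk : 2 ≤ k) (hc : c' ≤ c) :
    NF k (Ack k a b + c') a b c' := by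
  obtain ⟨rfl, n, as, bs, ms, hn, hS, rfl, rfl⟩ := h
  have hlast : ms n ≤ Ack k (as n) (bs n) + c' := hS.ms_last hn ▸ Nat.le_add_right _ _
  exact ⟨rfl, n, as, bs, ms, hn, hS.of_le hk hlast (Nat.add_le_add_left hc _), rfl, rfl⟩

end

theorem stmt_9 (k m d p q : ℕ) (hk : 2 ≤ k) (hm : SNF k m d (p + 1) q) (hp : 0 < p) :
    SNF k (d * p + q) d p q := by
  obtain ⟨a, b, c, hNF, rfl, hmd, hq⟩ := hm
  obtain ⟨r, rfl⟩ := Nat.exists_eq_add_of_le' hp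
  have hm_eq : m = Ack k a b + c := hNF.1
  have hc : Ack k a b * r + q ≤ c := by linarith
  have hsplit : Ack k a b * (r + 1) + q = Ack k a b + (Ack k a b * r + q) := by ring
  exact ⟨a, b, _, hsplit ▸ hNF.of_remainder_le hk hc, rfl, rfl, hq⟩
end
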